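/- arXiv:2005.07997 — 8 statements merged into one kernel-verified Lean document; each statement's English description precedes it below -/
import Mathlib

section
/- Suppose C is a contribution profile such that every agent i with C_i > 0 has at least one acceptable project, and let δ be a Nash distribution for C. Then no distribution dominates δ: there is no δ' ∈ Δ(|C|) with u_i(δ') ≥ u_i(δ) for every agent i with C_i > 0 and u_i(δ') > u_i(δ) for at least one agent i with C_i > 0. -/
/-!
Spreading the pool evenly over the projects gives every contributing agent positive utility, so the
maximal Nash product is positive. Hence no factor of a Nash distribution's product vanishes, and
replacing it by a dominating distribution would strictly increase the product.
-/

open Finset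

/-- A distribution of value `V`: nonnegative and sums to `V`. -/
def IsDistribution {A : Type*} [Fintype A] (δ : A → ℝ) (V : ℝ) : Prop :=
  (∀ x, 0 ≤ δ x) ∧ ∑ x, δ x = V

/-- Agent's (linear) utility of a distribution. -/
def util {A : Type*} [Fintype A] (u : A → ℝ) (δ : A → ℝ) : ℝ :=
  ∑ x, δ x * u x

/-- The Nash product of a distribution (real exponentiation, `0 ^ 0 = 1`). -/
noncomputable def nashProduct {A N : Type*} [Fintype A] [Fintype N]
    (u : N → A → ℝ) (C : N → ℝ) (δ : A → ℝ) : ℝ :=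
  ∏ i, (util (u i) δ) ^ (C i)

/-- A Nash distribution for contribution profile `C`: a maximizer of the Nash
product over `Δ(|C|)`. -/
def IsNashDistribution {A N : Type*} [Fintype A] [Fintype N]
    (u : N → A → ℝ) (C : N → ℝ) (δ : A → ℝ) : Prop :=
  IsDistribution δ (∑ i, C i) ∧
    ∀ δ' : A → ℝ, IsDistribution δ' (∑ i, C i) →
      nashProduct u C δ' ≤ nashProduct u C δ

theorem prod_rpow_pos {ι : Type*} {s : Finset ι} {f w : ι → ℝ}
    (hw : ∀ i ∈ s, 0 ≤ w i) (hf : ∀ i ∈ s, 0 < w i → 0 < f i) :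
    0 < ∏ i ∈ s, f i ^ w i := by
  refine prod_pos fun i hi => ?_
  rcases (hw i hi).eq_or_lt with hzero | hpos
  · simp [← hzero]
  · exact Real.rpow_pos_of_pos (hf i hi hpos) _

theorem prod_rpow_lt_prod_rpow {ι : Type*} {s : Finset ι} {f g w : ι → ℝ}
    (hw : ∀ i ∈ s, 0 ≤ w i) (hf : ∀ i ∈ s, 0 ≤ f i) (hprod : ∏ i ∈ s, f i ^ w i ≠ 0)
    (hle : ∀ i ∈ s, 0 < w i → f i ≤ g i) (hlt : ∃ i ∈ s, 0 < w i ∧ f i < g i) :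
    ∏ i ∈ s, f i ^ w i < ∏ i ∈ s, g i ^ w i := by
  have factor_pos : ∀ i ∈ s, 0 < f i ^ w i := fun i hi =>
    (Real.rpow_nonneg (hf i hi) _).lt_of_ne' (prod_ne_zero_iff.mp hprod i hi)
  have factor_le : ∀ i ∈ s, f i ^ w i ≤ g i ^ w i := by
    intro i hi
    rcases (hw i hi).eq_or_lt with hzero | hpos
    · simp [← hzero]
    · exact Real.rpow_le_rpow (hf i hi) (hle i hi hpos) hpos.le
  obtain ⟨j, hj, hwj, hfg⟩ := hlt
  exact prod_lt_prod factor_pos factor_le ⟨j, hj, Real.rpow_lt_rpow (hf j hj) hfg hwj⟩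

section Distribution

variable {A : Type*} [Fintype A] {u δ : A → ℝ}

theorem isDistribution_uniform [Nonempty A] {V : ℝ} (hV : 0 ≤ V) :
    IsDistribution (fun _ : A => V / Fintype.card A) V := by
  refine ⟨fun _ => by positivity, ?_⟩
  rw [sum_const, card_univ, nsmul_eq_mul]
  field_simp

theorem util_nonneg (hu : ∀ x, 0 ≤ u x) (hδ : ∀ x, 0 ≤ δ x) : 0 ≤ util u δ :=
  sum_nonneg fun x _ => mul_nonneg (hδ x) (hu x)

theorem util_pos (hu : ∀ x, 0 ≤ u x) (hacc : ∃ x, 0 < u x) (hδ : ∀ x, 0 < δ x) :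
    0 < util u δ := by
  obtain ⟨x, hx⟩ := hacc
  exact sum_pos' (fun y _ => mul_nonneg (hδ y).le (hu y)) ⟨x, mem_univ x, mul_pos (hδ x) hx⟩

end Distribution

/-- `δ'` dominates `δ`: Pareto dominance among the contributing agents, those with `0 < C i`.
The values of the two distributions are not constrained. -/
def Dominates {A N : Type*} [Fintype A] (u : N → A → ℝ) (C : N → ℝ) (δ' δ : A → ℝ) : Prop :=
  (∀ i, 0 < C i → util (u i) δ ≤ util (u i) δ') ∧
    ∃ i, 0 < C i ∧ util (u i) δ < util (u i) δ'

section Nash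

variable {A N : Type*} [Fintype A] [Fintype N] {u : N → A → ℝ} {C : N → ℝ} {δ δ' : A → ℝ}

theorem IsNashDistribution.nashProduct_pos [Nonempty A] (hδ : IsNashDistribution u C δ)
    (hu : ∀ i x, 0 ≤ u i x) (hC : ∀ i, 0 ≤ C i) (hacc : ∀ i, 0 < C i → ∃ x, 0 < u i x) :
    0 < nashProduct u C δ := by
  have uniform_prod_pos : 0 < nashProduct u C fun _ => (∑ i, C i) / Fintype.card A := by
    refine prod_rpow_pos (fun i _ => hC i) fun i _ hi => ?_
    have hpool : 0 < ∑ i, C i := sum_pos' (fun i _ => hC i) ⟨i, mem_univ i, hi⟩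
    exact util_pos (hu i) (hacc i hi) fun _ => by positivity
  exact uniform_prod_pos.trans_le (hδ.2 _ (isDistribution_uniform (sum_nonneg fun i _ => hC i)))

theorem Dominates.nashProduct_lt (hdom : Dominates u C δ' δ) (hC : ∀ i, 0 ≤ C i)
    (hutil : ∀ i, 0 ≤ util (u i) δ) (hprod : nashProduct u C δ ≠ 0) :
    nashProduct u C δ < nashProduct u C δ' := by
  obtain ⟨hle, j, hj, hlt⟩ := hdom
  exact prod_rpow_lt_prod_rpow (fun i _ => hC i) (fun i _ => hutil i) hprod
    (fun i _ => hle i) ⟨j, mem_univ j, hj, hlt⟩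

end Nash

theorem nash_efficient {A N : Type*} [Fintype A] [Nonempty A] [Fintype N]
    (u : N → A → ℝ) (hu : ∀ i x, 0 ≤ u i x)
    (C : N → ℝ) (hC : ∀ i, 0 ≤ C i)
    (hacc : ∀ i, 0 < C i → ∃ x, 0 < u i x)
    (δ : A → ℝ) (hδ : IsNashDistribution u C δ) :
    ¬ ∃ δ' : A → ℝ, IsDistribution δ' (∑ i, C i) ∧
        (∀ i, 0 < C i → util (u i) δ ≤ util (u i) δ') ∧
        (∃ i, 0 < C i ∧ util (u i) δ < util (u i) δ') := by
  rintro ⟨δ', hδ', hdom : Dominates u C δ' δ⟩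
  have hprod : 0 < nashProduct u C δ := hδ.nashProduct_pos hu hC hacc
  have hutil : ∀ i, 0 ≤ util (u i) δ := fun i => util_nonneg (hu i) hδ.1.1
  exact (hδ.2 δ' hδ').not_gt (hdom.nashProduct_lt hC hutil hprod.ne')
end

section
/- Suppose C is a contribution profile with C_i > 0 for all i ∈ N and every agent has at least one acceptable project. Let δ⁰ ∈ Δ(|C|) satisfy δ⁰(x) > 0 for all x ∈ A, and define the sequence (δ^k) by δ^{k+1}(x) = Σ_{i∈N} C_i · (u_i(x)/u_i(δ^k)) · δ^k(x) for all x ∈ A. Then the sequence of Nash products ∏_{i∈N} (u_i(δ^k))^{C_i} converges, as k → ∞, to the maximum of the Nash product over Δ(|C|). -/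
open Finset

open Filter Topology

/-!
Write `r x e = ∑ i, C i * (u i x / util (u i) e)`, so that the dynamics multiply `e x` by `r x e`,
and let `T` be one step of the dynamics. Splitting each contribution `C i` over the projects in
proportion to `d x * u i x` gives shares with marginals `C i` over the agents and `T d x` over the
projects. Applying `log z ≤ z - 1` to `z = util (u i) d / (util (u i) e * r x e)` and averaging with
these shares yields, for every distribution `d`,

  `∑ i, C i * (log (util (u i) d) - log (util (u i) e)) ≤ ∑ x, T d x * log (r x e)`.

At `e = δ k` the right side is the increment at step `k` of `∑ x, T d x * log (δ k x)`, which is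
bounded above. If `d` maximizes the Nash product, the left side is nonnegative, so it is summable
in `k` and tends to `0`.
-/

lemma tendsto_zero_of_nonneg_of_le_sub_of_bddAbove {g Φ : ℕ → ℝ} (hg : ∀ k, 0 ≤ g k)
    (hgΦ : ∀ k, g k ≤ Φ (k + 1) - Φ k) (hΦ : BddAbove (Set.range Φ)) :
    Tendsto g atTop (𝓝 0) := by
  obtain ⟨B, hB⟩ := hΦ
  have hsum : ∀ n, ∑ k ∈ range n, g k ≤ B - Φ 0 := fun n =>
    calc ∑ k ∈ range n, g k ≤ ∑ k ∈ range n, (Φ (k + 1) - Φ k) := sum_le_sum fun k _ => hgΦ k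
      _ = Φ n - Φ 0 := sum_range_sub Φ n
      _ ≤ B - Φ 0 := by gcongr; exact hB ⟨n, rfl⟩
  exact (summable_of_sum_range_le hg hsum).tendsto_atTop_zero

section Distribution

variable {A : Type*} [Fintype A] {V : ℝ} {d : A → ℝ}

lemma IsDistribution.le_value (hd : IsDistribution d V) (x : A) : d x ≤ V :=
  hd.2 ▸ single_le_sum (fun y _ => hd.1 y) (mem_univ x)

lemma isCompact_isDistribution (V : ℝ) : IsCompact {d : A → ℝ | IsDistribution d V} := by
  have hclosed : IsClosed {d : A → ℝ | IsDistribution d V} := by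
    simp only [IsDistribution, Set.ofPred_and, Set.ofPred_forall]
    exact (isClosed_iInter fun x => isClosed_le continuous_const (continuous_apply x)).inter
      (isClosed_eq (by fun_prop) continuous_const)
  exact (isCompact_univ_pi fun _ : A => isCompact_Icc (a := 0) (b := V)).of_isClosed_subset
    hclosed fun d hd x _ => ⟨hd.1 x, hd.le_value x⟩

lemma continuous_util (v : A → ℝ) : Continuous (util v) := by
  unfold util
  fun_prop

lemma util_nonneg_s6 {v : A → ℝ} (hv : ∀ x, 0 ≤ v x) (hd : ∀ x, 0 ≤ d x) : 0 ≤ util v d :=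
  sum_nonneg fun x _ => mul_nonneg (hd x) (hv x)

lemma util_pos_s6 {v : A → ℝ} (hv : ∀ x, 0 ≤ v x) (hacc : ∃ x, 0 < v x)
    (hd : ∀ x, 0 < v x → 0 < d x) : 0 < util v d := by
  obtain ⟨x, hx⟩ := hacc
  refine sum_pos' (fun y _ => ?_) ⟨x, mem_univ x, mul_pos (hd x hx) hx⟩
  rcases (hv y).eq_or_lt with hy | hy
  · simp [← hy]
  · exact (mul_pos (hd y hy) hy).le

/-- The logarithmic score `∑ x, p x * log (q x)` of `q` under the weights `p`, i.e. minus their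
cross entropy. Projects with `q x = 0` contribute `0` because `Real.log 0 = 0`. -/
noncomputable def logScore (p q : A → ℝ) : ℝ :=
  ∑ x, p x * Real.log (q x)

lemma logScore_le {p q : A → ℝ} (hp : ∀ x, 0 ≤ p x) (hq : IsDistribution q V) :
    logScore p q ≤ (∑ x, p x) * V := by
  rw [logScore, sum_mul]
  exact sum_le_sum fun x _ => mul_le_mul_of_nonneg_left
    ((Real.log_le_self (hq.1 x)).trans (hq.le_value x)) (hp x)

end Distribution

section NashDynamics

variable {A N : Type*} [Fintype A] {u : N → A → ℝ} {C : N → ℝ} {d e : A → ℝ}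

/-- Every agent with a positive contribution has positive utility from `d`; for such `d` the
Nash product is positive and `logNash` is its logarithm. -/
def ServesContributors (u : N → A → ℝ) (C : N → ℝ) (d : A → ℝ) : Prop :=
  ∀ i, 0 < C i → 0 < util (u i) d

/-- Every project acceptable to an agent with a positive contribution receives a positive amount.
The dynamics preserve this, whereas all other projects receive `0` after one step. -/
def CoversAcceptable (u : N → A → ℝ) (C : N → ℝ) (d : A → ℝ) : Prop :=
  ∀ i x, 0 < C i → 0 < u i x → 0 < d x

lemma CoversAcceptable.servesContributors (hu : ∀ i x, 0 ≤ u i x)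
    (hacc : ∀ i, 0 < C i → ∃ x, 0 < u i x) (he : CoversAcceptable u C e) :
    ServesContributors u C e :=
  fun i hi => util_pos_s6 (hu i) (hacc i hi) fun x => he i x hi

/-- The part of the contribution of agent `i` that goes to project `x` when `C i` is split in
proportion to the utilities `d x * u i x`. -/
noncomputable def nashShare (u : N → A → ℝ) (C : N → ℝ) (d : A → ℝ) (i : N) (x : A) : ℝ :=
  C i * (u i x / util (u i) d) * d x

lemma sum_nashShare (hC : ∀ i, 0 ≤ C i) (hd : ServesContributors u C d) (i : N) :
    ∑ x, nashShare u C d i x = C i := by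
  rcases (hC i).eq_or_lt with hi | hi
  · simp [nashShare, ← hi]
  calc ∑ x, nashShare u C d i x = ∑ x, C i / util (u i) d * (d x * u i x) :=
        sum_congr rfl fun x _ => by rw [nashShare]; ring
    _ = C i / util (u i) d * util (u i) d := (mul_sum ..).symm
    _ = C i := div_mul_cancel₀ _ (hd i hi).ne'

lemma mul_div_util_nonneg (hu : ∀ i x, 0 ≤ u i x) (hC : ∀ i, 0 ≤ C i)
    (hd : ServesContributors u C d) (i : N) (x : A) : 0 ≤ C i * (u i x / util (u i) d) := by
  rcases (hC i).eq_or_lt with hi | hi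
  · simp [← hi]
  · exact mul_nonneg hi.le (div_nonneg (hu i x) (hd i hi).le)

lemma nashShare_nonneg (hu : ∀ i x, 0 ≤ u i x) (hC : ∀ i, 0 ≤ C i) (hd0 : ∀ x, 0 ≤ d x)
    (hd : ServesContributors u C d) (i : N) (x : A) : 0 ≤ nashShare u C d i x :=
  mul_nonneg (mul_div_util_nonneg hu hC hd i x) (hd0 x)

variable [Fintype N]

lemma continuous_nashProduct (u : N → A → ℝ) (hC : ∀ i, 0 ≤ C i) : Continuous (nashProduct u C) :=
  continuous_finsetProd _ fun i _ => (continuous_util (u i)).rpow_const fun _ => Or.inr (hC i)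

lemma exists_isNashDistribution (u : N → A → ℝ) (hC : ∀ i, 0 ≤ C i)
    (hne : ∃ e : A → ℝ, IsDistribution e (∑ i, C i)) : ∃ d, IsNashDistribution u C d := by
  obtain ⟨d, hd, hmax⟩ := (isCompact_isDistribution (∑ i, C i)).exists_isMaxOn hne
    (continuous_nashProduct u hC).continuousOn
  exact ⟨d, hd, fun _ he => hmax he⟩

/-- The logarithm `∑ i, C i * log (util (u i) d)` of the Nash product, meaningful when
`ServesContributors u C d`. -/
noncomputable def logNash (u : N → A → ℝ) (C : N → ℝ) (d : A → ℝ) : ℝ :=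
  ∑ i, C i * Real.log (util (u i) d)

lemma nashProduct_eq_exp_logNash (hC : ∀ i, 0 ≤ C i) (hd : ServesContributors u C d) :
    nashProduct u C d = Real.exp (logNash u C d) := by
  rw [nashProduct, logNash, Real.exp_sum]
  refine prod_congr rfl fun i _ => ?_
  rcases (hC i).eq_or_lt with hi | hi
  · simp [← hi]
  · rw [Real.rpow_def_of_pos (hd i hi), mul_comm]

lemma servesContributors_of_nashProduct_pos (hu : ∀ i x, 0 ≤ u i x) (hd : ∀ x, 0 ≤ d x)
    (hpos : 0 < nashProduct u C d) : ServesContributors u C d := by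
  refine fun i hi => (util_nonneg_s6 (hu i) hd).lt_of_ne' fun hzero => hpos.ne' ?_
  exact prod_eq_zero (mem_univ i) (by rw [hzero, Real.zero_rpow hi.ne'])

lemma IsNashDistribution.servesContributors (hu : ∀ i x, 0 ≤ u i x) (hC : ∀ i, 0 ≤ C i)
    (hd : IsNashDistribution u C d) (he : IsDistribution e (∑ i, C i))
    (hse : ServesContributors u C e) : ServesContributors u C d := by
  refine servesContributors_of_nashProduct_pos hu hd.1.1 (lt_of_lt_of_le ?_ (hd.2 e he))
  rw [nashProduct_eq_exp_logNash hC hse]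
  exact Real.exp_pos _

lemma IsNashDistribution.logNash_le (hC : ∀ i, 0 ≤ C i) (hd : IsNashDistribution u C d)
    (hsd : ServesContributors u C d) (he : IsDistribution e (∑ i, C i))
    (hse : ServesContributors u C e) : logNash u C e ≤ logNash u C d := by
  have hle := hd.2 e he
  rwa [nashProduct_eq_exp_logNash hC hse, nashProduct_eq_exp_logNash hC hsd,
    Real.exp_le_exp] at hle

/-- The partial derivative of `logNash u C` at `d` in the direction of project `x`; it is also the
factor by which the dynamics multiply `d x`. -/
noncomputable def nashGradient (u : N → A → ℝ) (C : N → ℝ) (d : A → ℝ) (x : A) : ℝ :=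
  ∑ i, C i * (u i x / util (u i) d)

/-- One step of the Nash dynamics. -/
noncomputable def nashStep (u : N → A → ℝ) (C : N → ℝ) (d : A → ℝ) (x : A) : ℝ :=
  ∑ i, nashShare u C d i x

lemma nashStep_eq_nashGradient_mul (u : N → A → ℝ) (C : N → ℝ) (d : A → ℝ) (x : A) :
    nashStep u C d x = nashGradient u C d x * d x :=
  (sum_mul ..).symm

lemma sum_nashStep (hC : ∀ i, 0 ≤ C i) (hd : ServesContributors u C d) :
    ∑ x, nashStep u C d x = ∑ i, C i := by
  simp only [nashStep]
  rw [sum_comm]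
  exact sum_congr rfl fun i _ => sum_nashShare hC hd i

lemma nashGradient_pos (hu : ∀ i x, 0 ≤ u i x) (hC : ∀ i, 0 ≤ C i)
    (hd : ServesContributors u C d) {i : N} {x : A} (hi : 0 < C i) (hx : 0 < u i x) :
    0 < nashGradient u C d x :=
  sum_pos' (fun j _ => mul_div_util_nonneg hu hC hd j x)
    ⟨i, mem_univ i, mul_pos hi (div_pos hx (hd i hi))⟩

lemma exists_acceptable_of_nashStep_ne_zero (hu : ∀ i x, 0 ≤ u i x) (hC : ∀ i, 0 ≤ C i) {x : A}
    (hx : nashStep u C d x ≠ 0) : ∃ i, 0 < C i ∧ 0 < u i x := by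
  obtain ⟨i, -, hi⟩ := exists_ne_zero_of_sum_ne_zero hx
  refine ⟨i, (hC i).lt_of_ne' fun h => hi ?_, (hu i x).lt_of_ne' fun h => hi ?_⟩ <;>
    simp [nashShare, h]

lemma nashStep_nonneg (hu : ∀ i x, 0 ≤ u i x) (hC : ∀ i, 0 ≤ C i) (hd0 : ∀ x, 0 ≤ d x)
    (hd : ServesContributors u C d) (x : A) : 0 ≤ nashStep u C d x :=
  sum_nonneg fun i _ => nashShare_nonneg hu hC hd0 hd i x

lemma nashShare_mul_log_le (hu : ∀ i x, 0 ≤ u i x) (hC : ∀ i, 0 ≤ C i) (hd0 : ∀ x, 0 ≤ d x)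
    (hd : ServesContributors u C d) (he : ServesContributors u C e) (i : N) (x : A) :
    nashShare u C d i x * (Real.log (util (u i) d) - Real.log (util (u i) e)
        - Real.log (nashGradient u C e x)) ≤
      C i * (u i x / util (u i) e) * (d x / nashGradient u C e x) - nashShare u C d i x := by
  rcases (hC i).eq_or_lt with hi | hi
  · simp [nashShare, ← hi]
  rcases (hu i x).eq_or_lt with hx | hx
  · simp [nashShare, ← hx]
  have hUd := hd i hi
  have hUe := he i hi
  have hr := nashGradient_pos hu hC he hi hx
  set r := nashGradient u C e x
  calc nashShare u C d i x * (Real.log (util (u i) d) - Real.log (util (u i) e) - Real.log r)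
      = nashShare u C d i x * Real.log (util (u i) d / util (u i) e / r) := by
        rw [Real.log_div (by positivity) hr.ne', Real.log_div hUd.ne' hUe.ne']
    _ ≤ nashShare u C d i x * (util (u i) d / util (u i) e / r - 1) :=
        mul_le_mul_of_nonneg_left (Real.log_le_sub_one_of_pos (by positivity))
          (nashShare_nonneg hu hC hd0 hd i x)
    _ = C i * (u i x / util (u i) e) * (d x / r) - nashShare u C d i x := by
        rw [nashShare]
        field_simp

lemma logNash_sub_le_logScore_nashGradient (hu : ∀ i x, 0 ≤ u i x) (hC : ∀ i, 0 ≤ C i)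
    (hd0 : ∀ x, 0 ≤ d x) (hdV : ∑ x, d x ≤ ∑ i, C i) (hd : ServesContributors u C d)
    (he : ServesContributors u C e) :
    logNash u C d - logNash u C e ≤ logScore (nashStep u C d) (nashGradient u C e) := by
  have hgap : logNash u C d - logNash u C e =
      ∑ i, ∑ x, nashShare u C d i x * (Real.log (util (u i) d) - Real.log (util (u i) e)) := by
    simp only [logNash, ← sum_mul, sum_nashShare hC hd, mul_sub, sum_sub_distrib]
  have hscore : logScore (nashStep u C d) (nashGradient u C e) =
      ∑ i, ∑ x, nashShare u C d i x * Real.log (nashGradient u C e x) := by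
    simp only [logScore, nashStep, sum_mul]
    exact sum_comm
  have hmass : ∑ i, ∑ x, C i * (u i x / util (u i) e) * (d x / nashGradient u C e x) ≤ ∑ x, d x :=
    calc ∑ i, ∑ x, C i * (u i x / util (u i) e) * (d x / nashGradient u C e x)
        = ∑ x, nashGradient u C e x * (d x / nashGradient u C e x) := by
          rw [sum_comm]
          simp only [nashGradient, sum_mul]
      _ ≤ ∑ x, d x := sum_le_sum fun x _ => by
          rw [mul_div_left_comm]
          exact mul_le_of_le_one_right (hd0 x) (div_self_le_one _)
  have hlog := sum_le_sum fun i (_ : i ∈ univ) =>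
    sum_le_sum fun x (_ : x ∈ univ) => nashShare_mul_log_le hu hC hd0 hd he i x
  simp only [mul_sub _ (_ - _), sum_sub_distrib, sum_nashShare hC hd] at hlog
  linarith

lemma coversAcceptable_nashStep (hu : ∀ i x, 0 ≤ u i x) (hC : ∀ i, 0 ≤ C i)
    (hacc : ∀ i, 0 < C i → ∃ x, 0 < u i x) (he : CoversAcceptable u C e) :
    CoversAcceptable u C (nashStep u C e) := fun i x hi hx => by
  rw [nashStep_eq_nashGradient_mul]
  exact mul_pos (nashGradient_pos hu hC (he.servesContributors hu hacc) hi hx) (he i x hi hx)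

lemma isDistribution_nashStep (hu : ∀ i x, 0 ≤ u i x) (hC : ∀ i, 0 ≤ C i)
    (hacc : ∀ i, 0 < C i → ∃ x, 0 < u i x) (he : CoversAcceptable u C e) :
    IsDistribution (nashStep u C e) (∑ i, C i) := by
  refine ⟨fun x => ?_, sum_nashStep hC (he.servesContributors hu hacc)⟩
  by_contra! hneg
  obtain ⟨i, hi, hx⟩ := exists_acceptable_of_nashStep_ne_zero hu hC hneg.ne
  exact hneg.not_gt (coversAcceptable_nashStep hu hC hacc he i x hi hx)

lemma logScore_nashStep_nashGradient (hu : ∀ i x, 0 ≤ u i x) (hC : ∀ i, 0 ≤ C i)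
    (hacc : ∀ i, 0 < C i → ∃ x, 0 < u i x) (he : CoversAcceptable u C e) :
    logScore (nashStep u C d) (nashGradient u C e) =
      logScore (nashStep u C d) (nashStep u C e) - logScore (nashStep u C d) e := by
  simp only [logScore, ← sum_sub_distrib, ← mul_sub]
  refine sum_congr rfl fun x _ => ?_
  rcases eq_or_ne (nashStep u C d x) 0 with hx | hx
  · simp only [hx, zero_mul]
  obtain ⟨i, hi, hix⟩ := exists_acceptable_of_nashStep_ne_zero hu hC hx
  rw [nashStep_eq_nashGradient_mul u C e, Real.log_mul
    (nashGradient_pos hu hC (he.servesContributors hu hacc) hi hix).ne' (he i x hi hix).ne',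
    add_sub_cancel_right]

variable {δ : ℕ → A → ℝ}

lemma coversAcceptable_of_nashStep_rec (hu : ∀ i x, 0 ≤ u i x) (hC : ∀ i, 0 ≤ C i)
    (hacc : ∀ i, 0 < C i → ∃ x, 0 < u i x) (h0 : CoversAcceptable u C (δ 0))
    (hrec : ∀ k, δ (k + 1) = nashStep u C (δ k)) (k : ℕ) : CoversAcceptable u C (δ k) := by
  induction k with
  | zero => exact h0
  | succ k ih => exact hrec k ▸ coversAcceptable_nashStep hu hC hacc ih

lemma tendsto_logNash_of_nashStep_rec (hu : ∀ i x, 0 ≤ u i x) (hC : ∀ i, 0 ≤ C i)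
    (hd : IsNashDistribution u C d) (hsd : ServesContributors u C d)
    (hacc : ∀ i, 0 < C i → ∃ x, 0 < u i x) (h0 : CoversAcceptable u C (δ 0))
    (hrec : ∀ k, δ (k + 1) = nashStep u C (δ k)) :
    Tendsto (fun k => logNash u C (δ k)) atTop (𝓝 (logNash u C d)) := by
  have hcov := coversAcceptable_of_nashStep_rec hu hC hacc h0 hrec
  have hserve : ∀ k, ServesContributors u C (δ k) := fun k => (hcov k).servesContributors hu hacc
  -- `δ 0` may have any total value, so `d` is compared with `δ 1, δ 2, …` only.
  have hdist : ∀ k, IsDistribution (δ (k + 1)) (∑ i, C i) := fun k =>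
    hrec k ▸ isDistribution_nashStep hu hC hacc (hcov k)
  have hstep : ∀ k, logNash u C d - logNash u C (δ k) ≤
      logScore (nashStep u C d) (δ (k + 1)) - logScore (nashStep u C d) (δ k) := fun k => by
    rw [hrec, ← logScore_nashStep_nashGradient hu hC hacc (hcov k)]
    exact logNash_sub_le_logScore_nashGradient hu hC hd.1.1 hd.1.2.le hsd (hserve k)
  have hbdd : BddAbove (Set.range fun k => logScore (nashStep u C d) (δ (k + 1))) := by
    refine ⟨(∑ x, nashStep u C d x) * ∑ i, C i, Set.forall_mem_range.2 fun k => ?_⟩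
    exact logScore_le (nashStep_nonneg hu hC hd.1.1 hsd) (hdist k)
  have hgap : Tendsto (fun k => logNash u C d - logNash u C (δ (k + 1))) atTop (𝓝 0) :=
    tendsto_zero_of_nonneg_of_le_sub_of_bddAbove
      (fun k => sub_nonneg.2 (hd.logNash_le hC hsd (hdist k) (hserve (k + 1))))
      (fun k => hstep (k + 1)) hbdd
  rw [← tendsto_add_atTop_iff_nat 1]
  simpa using hgap.const_sub (logNash u C d)

end NashDynamics

theorem nash_dynamics_value_converges_general {A N : Type*} [Fintype A] [Fintype N]
    (u : N → A → ℝ) (hu : ∀ i x, 0 ≤ u i x)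
    (C : N → ℝ) (hC : ∀ i, 0 ≤ C i)
    (hacc : ∀ i, 0 < C i → ∃ x, 0 < u i x)
    (δ : ℕ → A → ℝ) (h0 : CoversAcceptable u C (δ 0))
    (hrec : ∀ k, δ (k + 1) = nashStep u C (δ k)) :
    ∃ M : ℝ, IsGreatest {p : ℝ | ∃ d : A → ℝ, IsDistribution d (∑ i, C i) ∧
        nashProduct u C d = p} M ∧
      Tendsto (fun k => nashProduct u C (δ k)) atTop (𝓝 M) := by
  have hserve : ∀ k, ServesContributors u C (δ k) := fun k =>
    (coversAcceptable_of_nashStep_rec hu hC hacc h0 hrec k).servesContributors hu hacc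
  have hdist : IsDistribution (δ 1) (∑ i, C i) :=
    hrec 0 ▸ isDistribution_nashStep hu hC hacc h0
  obtain ⟨d, hd⟩ := exists_isNashDistribution u hC ⟨δ 1, hdist⟩
  have hsd := hd.servesContributors hu hC hdist (hserve 1)
  refine ⟨nashProduct u C d, ⟨⟨d, hd.1, rfl⟩, ?_⟩, ?_⟩
  · rintro _ ⟨e, he, rfl⟩
    exact hd.2 e he
  · simp only [nashProduct_eq_exp_logNash hC hsd, fun k => nashProduct_eq_exp_logNash hC (hserve k)]
    exact (Real.continuous_exp.tendsto _).comp
      (tendsto_logNash_of_nashStep_rec hu hC hd hsd hacc h0 hrec)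

theorem nash_dynamics_value_converges {A N : Type*}
    [Fintype A] [Nonempty A] [Fintype N]
    (u : N → A → ℝ) (hu : ∀ i x, 0 ≤ u i x)
    (C : N → ℝ) (hC : ∀ i, 0 < C i)
    (hacc : ∀ i, ∃ x, 0 < u i x)
    (δ : ℕ → A → ℝ)
    (h0 : IsDistribution (δ 0) (∑ i, C i)) (h0pos : ∀ x, 0 < δ 0 x)
    (hrec : ∀ k x, δ (k + 1) x = ∑ i, C i * (u i x / util (u i) (δ k)) * δ k x) :
    ∃ M : ℝ, IsGreatest {p : ℝ | ∃ d : A → ℝ, IsDistribution d (∑ i, C i) ∧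
        nashProduct u C d = p} M ∧
      Tendsto (fun k => nashProduct u C (δ k)) atTop (𝓝 M) :=
  nash_dynamics_value_converges_general u hu C (fun i => (hC i).le) (fun i _ => hacc i) δ
    (fun _ x _ _ => h0pos x) fun k => funext (hrec k)
end

section
/- (Incompatibility of strong decomposability and efficiency.) Let 0 < ε < 1, let A = {a, b, x} with three distinct projects, let N = {1, 2}, and define u_1(a) = 1+ε, u_1(b) = 0, u_1(x) = 1 and u_2(a) = 0, u_2(b) = 1+ε, u_2(x) = 1. Let C = (1, 1). Then for every δ ∈ Δ(2) that is strongly decomposable with respect to (u, C), there exists δ' ∈ Δ(2) with u_1(δ') > u_1(δ) and u_2(δ') > u_2(δ); hence no distribution in Δ(2) is both strongly decomposable and efficient for this profile. -/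
open Finset

/-- Strong decomposability: each agent's individual distribution spends only on
her maximum-utility projects. -/
def StronglyDecomposable {A N : Type*} [Fintype A] [Fintype N]
    (u : N → A → ℝ) (C : N → ℝ) (δ : A → ℝ) : Prop :=
  ∃ δi : N → A → ℝ, (∀ i, IsDistribution (δi i) (C i)) ∧
    (∀ x, δ x = ∑ i, δi i x) ∧
    ∀ i x, 0 < δi i x → ∀ y, u i y ≤ u i x

/-!
A strongly decomposable distribution splits into parts, one for each agent, supported on that
agent's favourite projects. Utility is linear, so replacing each part by the best of these projects
shows that the distribution is worth at most what some profile of favourites would be. With two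
agents whose favourites are worthless to each other, such a profile gives each of them `1 + ε`,
while spending the whole pool on the compromise project gives each of them `2`.
-/

section Distributions

variable {A : Type*} [Fintype A]

theorem IsDistribution.nonneg {δ : A → ℝ} {V : ℝ} (hδ : IsDistribution δ V) : 0 ≤ V :=
  hδ.2 ▸ sum_nonneg fun x _ => hδ.1 x

theorem isDistribution_single [DecidableEq A] (x : A) {V : ℝ} (hV : 0 ≤ V) :
    IsDistribution (Pi.single x V) V :=
  ⟨(Pi.single_nonneg (α := fun _ => ℝ)).mpr hV, Fintype.sum_pi_single' x V⟩

theorem util_single [DecidableEq A] (u : A → ℝ) (x : A) (V : ℝ) :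
    util u (Pi.single x V) = V * u x := by
  simp only [util, Pi.single_apply, ite_mul, zero_mul, sum_ite_eq', mem_univ, if_true]

theorem util_sum {N : Type*} [Fintype N] (u : A → ℝ) (d : N → A → ℝ) :
    util u (∑ i, d i) = ∑ i, util u (d i) := by
  simp only [util, Finset.sum_apply, sum_mul]
  exact sum_comm

theorem IsDistribution.util_le_mul {δ : A → ℝ} {V : ℝ} (hδ : IsDistribution δ V) {u : A → ℝ}
    {m : ℝ} (hm : ∀ x, 0 < δ x → u x ≤ m) : util u δ ≤ V * m := by
  rw [← hδ.2, sum_mul]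
  refine sum_le_sum fun x _ => ?_
  obtain hx | hx := (hδ.1 x).eq_or_lt
  · simp only [← hx, zero_mul, le_refl]
  · exact mul_le_mul_of_nonneg_left (hm x hx) hx.le

theorem IsDistribution.exists_mem_util_le_mul {δ : A → ℝ} {V : ℝ} (hδ : IsDistribution δ V)
    (u : A → ℝ) {S : Set A} (hS : S.Nonempty) (hsupp : ∀ x, 0 < δ x → x ∈ S) :
    ∃ x ∈ S, util u δ ≤ V * u x := by
  obtain ⟨x, hxS, hx⟩ := S.exists_max_image u S.toFinite hS
  exact ⟨x, hxS, hδ.util_le_mul fun y hy => hx y (hsupp y hy)⟩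

end Distributions

/-- A favourite project: one of maximum utility, on which strong decomposability allows an agent
with utility function `u` to spend. Favourites need not be unique. -/
def IsFavourite {A : Type*} (u : A → ℝ) (x : A) : Prop :=
  ∀ y, u y ≤ u x

theorem IsFavourite.eq_of_forall_lt {A : Type*} {u : A → ℝ} {x a : A} (hx : IsFavourite u x)
    (ha : ∀ y ≠ a, u y < u a) : x = a := by
  by_contra hxa
  exact (ha x hxa).not_ge (hx a)

/-- A compromise project for the contribution profile `C`: spending the whole pool on it is strictly
better for every agent than every agent `j` spending `C j` on a favourite `t j` of her own. The
condition ranges over all choices `t` of favourites. -/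
def IsCompromise {A N : Type*} [Fintype N] (u : N → A → ℝ) (C : N → ℝ) (x : A) : Prop :=
  ∀ t : N → A, (∀ j, IsFavourite (u j) (t j)) →
    ∀ i, ∑ j, C j * u i (t j) < (∑ j, C j) * u i x

section StrongDecomposability

variable {A N : Type*} [Fintype A] [Fintype N] {u : N → A → ℝ} {C : N → ℝ} {δ : A → ℝ}

theorem StronglyDecomposable.sum_nonneg (hδ : StronglyDecomposable u C δ) : 0 ≤ ∑ i, C i := by
  obtain ⟨d, hd, -, -⟩ := hδ
  exact Finset.sum_nonneg fun i _ => (hd i).nonneg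

theorem StronglyDecomposable.exists_util_le_sum [Nonempty A] (hδ : StronglyDecomposable u C δ)
    (v : A → ℝ) :
    ∃ t : N → A, (∀ j, IsFavourite (u j) (t j)) ∧ util v δ ≤ ∑ j, C j * v (t j) := by
  obtain ⟨d, hd, hsum, hfav⟩ := hδ
  have exists_favourite (j : N) : {x | IsFavourite (u j) x}.Nonempty := Finite.exists_max (u j)
  choose t ht hle using fun j => (hd j).exists_mem_util_le_mul v (exists_favourite j) (hfav j)
  refine ⟨t, ht, ?_⟩
  have δ_eq_sum : δ = ∑ j, d j := by
    ext x
    rw [hsum, Finset.sum_apply]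
  calc util v δ = util v (∑ j, d j) := by rw [δ_eq_sum]
    _ = ∑ j, util v (d j) := util_sum v d
    _ ≤ ∑ j, C j * v (t j) := sum_le_sum fun j _ => hle j

theorem strong_decomposability_inefficient_general {x : A} (hδ : StronglyDecomposable u C δ)
    (hx : IsCompromise u C x) :
    ∃ δ' : A → ℝ, IsDistribution δ' (∑ i, C i) ∧ ∀ i, util (u i) δ < util (u i) δ' := by
  classical
  have : Nonempty A := ⟨x⟩
  refine ⟨Pi.single x (∑ i, C i), isDistribution_single x hδ.sum_nonneg, fun i => ?_⟩
  obtain ⟨t, ht, hle⟩ := hδ.exists_util_le_sum (u i)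
  rw [util_single]
  exact hle.trans_lt (hx t ht i)

end StrongDecomposability

theorem isCompromise_two {ε : ℝ} (hε0 : 0 < ε) (hε1 : ε < 1) :
    IsCompromise (![![1 + ε, 0, 1], ![0, 1 + ε, 1]] : Fin 2 → Fin 3 → ℝ) ![1, 1] 2 := by
  intro t ht i
  have favourite_zero : t 0 = 0 := (ht 0).eq_of_forall_lt <| by
    simp [Fin.forall_fin_succ, hε0, add_pos one_pos hε0]
  have favourite_one : t 1 = 1 := (ht 1).eq_of_forall_lt <| by
    simp [Fin.forall_fin_succ, hε0, add_pos one_pos hε0]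
  simp only [Fin.sum_univ_two, favourite_zero, favourite_one]
  fin_cases i
  · change 1 * (1 + ε) + 1 * 0 < (1 + 1) * 1
    linarith
  · change 1 * 0 + 1 * (1 + ε) < (1 + 1) * 1
    linarith

theorem strong_decomposability_inefficient (ε : ℝ) (hε0 : 0 < ε) (hε1 : ε < 1) :
    ∀ δ : Fin 3 → ℝ, IsDistribution δ 2 →
      StronglyDecomposable (![![1 + ε, 0, 1], ![0, 1 + ε, 1]] : Fin 2 → Fin 3 → ℝ)
        (![1, 1] : Fin 2 → ℝ) δ →
      ∃ δ' : Fin 3 → ℝ, IsDistribution δ' 2 ∧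
        util (![1 + ε, 0, 1] : Fin 3 → ℝ) δ < util ![1 + ε, 0, 1] δ' ∧
        util (![0, 1 + ε, 1] : Fin 3 → ℝ) δ < util ![0, 1 + ε, 1] δ' := by
  intro δ _ hδ
  obtain ⟨δ', hδ', hlt⟩ :=
    strong_decomposability_inefficient_general hδ (isCompromise_two hε0 hε1)
  have pool : ∑ i, (![1, 1] : Fin 2 → ℝ) i = 2 := by norm_num [Fin.sum_univ_two]
  exact ⟨δ', pool ▸ hδ', hlt 0, hlt 1⟩
end

section
/- (Incompatibility of strong contribution incentive-compatibility and efficiency.) Let 0 < ε < 1/2, let A = {a, b, c, x} with four distinct projects, let N = {1, 2, 3}, and define u_1(a) = 2−ε, u_1(x) = 1, u_1(b) = u_1(c) = 0; u_2(b) = 2−ε, u_2(x) = 1, u_2(a) = u_2(c) = 0; u_3(c) = 2−ε, u_3(x) = 1, u_3(a) = u_3(b) = 0. Then there is no mechanism f assigning to each contribution profile C ∈ [0,1]^3 a distribution f(C) ∈ Δ(C_1 + C_2 + C_3) such that both of the following hold: (efficiency) for every profile C there is no δ' ∈ Δ(C_1 + C_2 + C_3) with u_i(δ') ≥ u_i(f(C))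 for all i with C_i > 0 and u_i(δ') > u_i(f(C)) for some i with C_i > 0; and (strong contribution incentive-compatibility) for every i ∈ N, every profile C ∈ [0,1]^3, and every 0 ≤ C'_i ≤ C_i, writing C' for the profile obtained from C by replacing C_i with C'_i, u_i(f(C)) − C_i·(2−ε) ≥ u_i(f(C')) − C'_i·(2−ε). -/
/-!
Let each of `n` agents value an own project at `M` and a common project at `1`, where
`n / (n - 1) < M < 2`. If the own projects of two contributors were funded, moving `t` from each of
them to the common project would change every agent's utility by at least `(2 - M) t > 0`, so
efficiency leaves at most one contributor with a funded own project. As long as there are at least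
two contributors, some contributor `j` thus draws all utility from the common project, and by strong
incentive-compatibility the common project loses at least `M C_j` when `j` withdraws. Withdrawing
such contributors one after the other shows that the common project receives at least
`M (∑ i, C i - 1)`. With unit contributions this is `M (n - 1)`, which exceeds the budget `n`.
-/

open Finset

lemma util_eq_dotProduct {A : Type*} [Fintype A] (w δ : A → ℝ) : util w δ = δ ⬝ᵥ w :=
  rfl

section Transfer

variable {A : Type*} [DecidableEq A]

/-- The distribution obtained from `δ` by moving the amount `t` from project `p` to project `q`. -/
def transfer (δ : A → ℝ) (p q : A) (t : ℝ) : A → ℝ :=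
  δ + Pi.single q t - Pi.single p t

lemma le_transfer_apply (δ : A → ℝ) {p q : A} (hqp : q ≠ p) (r : A) {t : ℝ} (ht : 0 ≤ t) :
    δ q ≤ transfer δ p r t q := by
  have hr : 0 ≤ (Pi.single r t : A → ℝ) q := (Pi.single_nonneg.2 ht : (0 : A → ℝ) ≤ _) q
  simp only [transfer, Pi.add_apply, Pi.sub_apply, Pi.single_eq_of_ne hqp]
  linarith

variable [Fintype A]

lemma util_transfer (w δ : A → ℝ) (p q : A) (t : ℝ) :
    util w (transfer δ p q t) = util w δ + t * (w q - w p) := by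
  rw [util_eq_dotProduct, util_eq_dotProduct, transfer, sub_dotProduct, add_dotProduct,
    single_dotProduct, single_dotProduct]
  ring

lemma IsDistribution.transfer {δ : A → ℝ} {V t : ℝ} (hδ : IsDistribution δ V) {p : A} (q : A)
    (ht : 0 ≤ t) (htp : t ≤ δ p) : IsDistribution (transfer δ p q t) V := by
  refine ⟨fun y => ?_, ?_⟩
  · rcases eq_or_ne y p with rfl | hyp
    · have hq : 0 ≤ (Pi.single q t : A → ℝ) y := (Pi.single_nonneg.2 ht : (0 : A → ℝ) ≤ _) y
      simp only [_root_.transfer, Pi.add_apply, Pi.sub_apply, Pi.single_eq_same]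
      linarith
    · exact (hδ.1 y).trans (le_transfer_apply δ hyp q ht)
  · simp [_root_.transfer, sum_add_distrib, hδ.2]

end Transfer

section Profile

variable {N : Type*} {C : N → ℝ}

lemma update_zero_mem_Icc [DecidableEq N] (hC : ∀ i, C i ∈ Set.Icc (0 : ℝ) 1) (j : N) :
    ∀ i, Function.update C j 0 i ∈ Set.Icc (0 : ℝ) 1 :=
  (Function.forall_update_iff C (p := fun _ c => c ∈ Set.Icc (0 : ℝ) 1)).2
    ⟨⟨le_rfl, zero_le_one⟩, fun i _ => hC i⟩

lemma sum_le_one_of_pos_subsingleton [Fintype N] (hC : ∀ i, C i ∈ Set.Icc (0 : ℝ) 1)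
    (hsub : {i | 0 < C i}.Subsingleton) : ∑ i, C i ≤ 1 := by
  rcases Set.eq_empty_or_nonempty {i | 0 < C i} with hempty | ⟨k, hk⟩
  · have hzero : ∀ i, C i = 0 := fun i =>
      (hC i).1.antisymm' (not_lt.1 fun hi => (hempty.subset hi : i ∈ (∅ : Set N)))
    simp [hzero]
  · rw [sum_eq_single k _ (by simp)]
    · exact (hC k).2
    · exact fun i _ hik => (hC i).1.antisymm' (not_lt.1 fun hi => hik (hsub hi hk))

lemma card_update_zero_ne_zero_lt [Fintype N] [DecidableEq N] {j : N} (hj : C j ≠ 0) :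
    #{i | Function.update C j 0 i ≠ 0} < #{i | C i ≠ 0} := by
  refine card_lt_card ((ssubset_iff_of_subset fun i => ?_).2 ⟨j, ?_⟩)
  · rcases eq_or_ne i j with rfl | hij <;> simp [*]
  · simp [hj]

end Profile

section Mechanism

variable {A N : Type*} [Fintype A] [Fintype N]

/-- A mechanism for contributions in `[0, 1]`: it distributes exactly the total contribution.
Profiles outside `[0, 1]^N` are unconstrained. -/
def IsMechanism (f : (N → ℝ) → A → ℝ) : Prop :=
  ∀ C : N → ℝ, (∀ i, C i ∈ Set.Icc (0 : ℝ) 1) → IsDistribution (f C) (∑ i, C i)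

/-- Efficiency of `δ` at the profile `C`: no distribution of the same value is a Pareto improvement
for the agents with a positive contribution. -/
def IsEfficientAt (u : N → A → ℝ) (C : N → ℝ) (δ : A → ℝ) : Prop :=
  ¬ ∃ δ' : A → ℝ, IsDistribution δ' (∑ i, C i) ∧
    (∀ i, 0 < C i → util (u i) δ ≤ util (u i) δ') ∧
    (∃ i, 0 < C i ∧ util (u i) δ < util (u i) δ')

/-- Strong contribution incentive-compatibility: no agent gains by lowering their contribution, when
a unit of money kept is worth `M`, the agents' common value for their favourite project. -/
def IsStrongCIC [DecidableEq N] (u : N → A → ℝ) (M : ℝ) (f : (N → ℝ) → A → ℝ) : Prop :=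
  ∀ i : N, ∀ C : N → ℝ, (∀ j, C j ∈ Set.Icc (0 : ℝ) 1) → ∀ Ci' : ℝ, 0 ≤ Ci' → Ci' ≤ C i →
    util (u i) (f (Function.update C i Ci')) - Ci' * M ≤ util (u i) (f C) - C i * M

lemma IsEfficientAt.exists_two_mul_le_add_of_funded {u : N → A → ℝ} {C : N → ℝ}
    {δ : A → ℝ} (heff : IsEfficientAt u C δ) (hδ : IsDistribution δ (∑ i, C i))
    (hC : ∃ i, 0 < C i) {p q : A} (hpq : p ≠ q) (hp : 0 < δ p) (hq : 0 < δ q) (r : A) :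
    ∃ i, 0 < C i ∧ 2 * u i r ≤ u i p + u i q := by
  classical
  by_contra! hlt
  set t := min (δ p) (δ q)
  have ht : 0 < t := lt_min hp hq
  set δ' := transfer (transfer δ p r t) q r t
  have hδ' : IsDistribution δ' (∑ i, C i) :=
    (hδ.transfer r ht.le (min_le_left _ _)).transfer r ht.le
      ((min_le_right _ _).trans (le_transfer_apply δ hpq.symm r ht.le))
  have himprove : ∀ i, 0 < C i → util (u i) δ < util (u i) δ' := fun i hi => by
    have hgain : 0 < t * (2 * u i r - (u i p + u i q)) := mul_pos ht (sub_pos.2 (hlt i hi))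
    rw [util_transfer, util_transfer]
    linarith
  obtain ⟨i, hi⟩ := hC
  exact heff ⟨δ', hδ', fun i hi => (himprove i hi).le, i, hi, himprove i hi⟩

end Mechanism

section OwnOrCommon

variable {A N : Type*} [DecidableEq A]

/-- The utilities of agents who each value an own project at `M`, the common project `x` at `1`, and
all other projects at `0`. -/
def ownOrCommonUtility (own : N → A) (x : A) (M : ℝ) (i : N) : A → ℝ :=
  Pi.single (own i) M + Pi.single x 1

lemma ownOrCommonUtility_add_le (own : N → A) {x : A} {M : ℝ} (hM : 0 ≤ M) {p q : A} (hpq : p ≠ q)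
    (hp : p ≠ x) (hq : q ≠ x) (i : N) :
    ownOrCommonUtility own x M i p + ownOrCommonUtility own x M i q ≤ M := by
  simp only [ownOrCommonUtility, Pi.add_apply, Pi.single_eq_of_ne hp, Pi.single_eq_of_ne hq,
    add_zero, Pi.single_apply]
  split_ifs with hpi hqi
  · exact absurd (hpi.trans hqi.symm) hpq
  all_goals simp [hM]

variable [Fintype A]

lemma util_ownOrCommonUtility (own : N → A) (x : A) (M : ℝ) (i : N) (δ : A → ℝ) :
    util (ownOrCommonUtility own x M i) δ = δ (own i) * M + δ x := by
  rw [util_eq_dotProduct, ownOrCommonUtility, dotProduct_add, dotProduct_single, dotProduct_single,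
    mul_one]

variable [Fintype N] {own : N → A} {x : A} {M : ℝ}

lemma IsEfficientAt.eq_of_own_funded (hown : own.Injective) (hx : ∀ i, own i ≠ x) (hM : 0 ≤ M)
    (hM2 : M < 2) {C : N → ℝ} {δ : A → ℝ}
    (heff : IsEfficientAt (ownOrCommonUtility own x M) C δ) (hδ : IsDistribution δ (∑ i, C i))
    {j k : N} (hCj : 0 < C j) (hj : 0 < δ (own j)) (hk : 0 < δ (own k)) : j = k := by
  by_contra hjk
  obtain ⟨i, -, hi⟩ :=
    heff.exists_two_mul_le_add_of_funded hδ ⟨j, hCj⟩ (hown.ne hjk) hj hk x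
  have hsum := ownOrCommonUtility_add_le own hM (hown.ne hjk) (hx j) (hx k) i
  have hix : ownOrCommonUtility own x M i x = 1 := by
    simp [ownOrCommonUtility, (hx i).symm]
  linarith

variable [DecidableEq N] {f : (N → ℝ) → A → ℝ}

lemma IsStrongCIC.common_update_add_le (hmech : IsMechanism f)
    (hcic : IsStrongCIC (ownOrCommonUtility own x M) M f) (hM : 0 ≤ M)
    {C : N → ℝ} (hC : ∀ i, C i ∈ Set.Icc (0 : ℝ) 1) (j : N) :
    f (Function.update C j 0) x + C j * M ≤ f C (own j) * M + f C x := by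
  have h := hcic j C hC 0 le_rfl (hC j).1
  have hown : 0 ≤ f (Function.update C j 0) (own j) * M :=
    mul_nonneg ((hmech _ (update_zero_mem_Icc hC j)).1 _) hM
  rw [util_ownOrCommonUtility, util_ownOrCommonUtility] at h
  linarith

theorem mul_sum_sub_one_le_common (hown : own.Injective) (hx : ∀ i, own i ≠ x) (hM : 0 ≤ M)
    (hM2 : M < 2) (hmech : IsMechanism f)
    (heff : ∀ C : N → ℝ, (∀ i, C i ∈ Set.Icc (0 : ℝ) 1) →
      IsEfficientAt (ownOrCommonUtility own x M) C (f C))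
    (hcic : IsStrongCIC (ownOrCommonUtility own x M) M f)
    {C : N → ℝ} (hC : ∀ i, C i ∈ Set.Icc (0 : ℝ) 1) :
    (∑ i, C i - 1) * M ≤ f C x := by
  induction hn : #{i | C i ≠ 0} using Nat.strong_induction_on generalizing C with | _ n ih
  by_cases hunfunded : ∃ j, 0 < C j ∧ f C (own j) = 0
  · obtain ⟨j, hCj, hj⟩ := hunfunded
    have hrest := ih _ (hn ▸ card_update_zero_ne_zero_lt hCj.ne') (update_zero_mem_Icc hC j) rfl
    have hstep := hcic.common_update_add_le hmech hM hC j
    have hsum : ∑ i, Function.update C j 0 i = ∑ i, C i - C j := by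
      rw [sum_update_of_mem (mem_univ j), zero_add, sum_sdiff_eq_sub (subset_univ _), sum_singleton]
    rw [hsum] at hrest
    rw [hj] at hstep
    linarith
  · push Not at hunfunded
    have hδ := hmech C hC
    have hfunded : ∀ j, 0 < C j → 0 < f C (own j) := fun j hj =>
      (hδ.1 _).lt_of_ne' (hunfunded j hj)
    have hsub : {i | 0 < C i}.Subsingleton := fun j hj k hk =>
      (heff C hC).eq_of_own_funded hown hx hM hM2 hδ hj (hfunded j hj) (hfunded k hk)
    have hsum := sum_le_one_of_pos_subsingleton hC hsub
    exact (mul_nonpos_of_nonpos_of_nonneg (sub_nonpos.2 hsum) hM).trans (hδ.1 x)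

theorem strong_cic_inefficient_general (hown : own.Injective) (hx : ∀ i, own i ≠ x) (hM : 0 ≤ M)
    (hM2 : M < 2) (hcard : (Fintype.card N : ℝ) < (Fintype.card N - 1) * M) :
    ¬ ∃ f : (N → ℝ) → A → ℝ, IsMechanism f ∧
      (∀ C : N → ℝ, (∀ i, C i ∈ Set.Icc (0 : ℝ) 1) →
        IsEfficientAt (ownOrCommonUtility own x M) C (f C)) ∧
      IsStrongCIC (ownOrCommonUtility own x M) M f := by
  rintro ⟨f, hmech, heff, hcic⟩
  have hC : ∀ i, (1 : N → ℝ) i ∈ Set.Icc (0 : ℝ) 1 := fun _ => ⟨zero_le_one, le_rfl⟩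
  have hsum : ∑ i, (1 : N → ℝ) i = Fintype.card N := by simp
  have hδ := hmech 1 hC
  have hle : f 1 x ≤ ∑ i, (1 : N → ℝ) i :=
    hδ.2 ▸ single_le_sum (fun y _ => hδ.1 y) (mem_univ x)
  have hge := mul_sum_sub_one_le_common hown hx hM hM2 hmech heff hcic hC
  rw [hsum] at hle hge
  linarith

end OwnOrCommon

lemma vecCons_utilities_eq_ownOrCommonUtility (M : ℝ) :
    ![![M, 0, 0, 1], ![0, M, 0, 1], ![0, 0, M, 1]] =
      ownOrCommonUtility (Fin.castSucc : Fin 3 → Fin 4) (Fin.last 3) M := by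
  ext i y
  fin_cases i <;> fin_cases y <;> simp [ownOrCommonUtility, Fin.ext_iff]

theorem strong_cic_inefficient (ε : ℝ) (hε0 : 0 < ε) (hε1 : ε < 1 / 2) :
    ¬ ∃ f : (Fin 3 → ℝ) → (Fin 4 → ℝ),
      let u : Fin 3 → Fin 4 → ℝ :=
        ![![2 - ε, 0, 0, 1], ![0, 2 - ε, 0, 1], ![0, 0, 2 - ε, 1]]
      (∀ C : Fin 3 → ℝ, (∀ i, C i ∈ Set.Icc (0 : ℝ) 1) →
          IsDistribution (f C) (∑ i, C i)) ∧
      -- efficiency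
      (∀ C : Fin 3 → ℝ, (∀ i, C i ∈ Set.Icc (0 : ℝ) 1) →
          ¬ ∃ δ' : Fin 4 → ℝ, IsDistribution δ' (∑ i, C i) ∧
            (∀ i, 0 < C i → util (u i) (f C) ≤ util (u i) δ') ∧
            (∃ i, 0 < C i ∧ util (u i) (f C) < util (u i) δ')) ∧
      -- strong contribution incentive-compatibility
      (∀ i : Fin 3, ∀ C : Fin 3 → ℝ, (∀ j, C j ∈ Set.Icc (0 : ℝ) 1) →
          ∀ Ci' : ℝ, 0 ≤ Ci' → Ci' ≤ C i →
            util (u i) (f (Function.update C i Ci')) - Ci' * (2 - ε) ≤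
              util (u i) (f C) - C i * (2 - ε)) := by
  rw [vecCons_utilities_eq_ownOrCommonUtility]
  exact strong_cic_inefficient_general (Fin.castSucc_injective 3) Fin.castSucc_ne_last
    (by linarith) (by linarith) (by norm_num; linarith)
end

section
/- Suppose every agent in N has at least one acceptable project, and let D = {C ∈ ℝ^N : C_i > 0 for all i}. Let 𝒰 : D → ℝ^N be any function such that for every C ∈ D there exists a maximizer δ of the Nash product δ ↦ ∏_{i∈N} (u_i(δ))^{C_i} over Δ(1) with 𝒰(C)_i = u_i(δ) for all i ∈ N (by uniqueness of the maximizing utility vector, 𝒰 is well defined and independent of the choice of maximizer). Then 𝒰 is continuous on D. -/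
/-!
Only the set `K` of attainable utility vectors matters. It is the image of the simplex under a
linear map, hence compact and convex. At the uniform distribution every agent has positive utility,
so a maximizer of the Nash welfare `∏ i, v i ^ C i` over `K` has positive welfare and therefore
positive coordinates. On vectors with positive coordinates the logarithm `∑ i, C i * log (v i)` of
the welfare is strictly concave, so there is only one maximizer. Since the welfare is jointly
continuous in `(C, v)` as long as the weights are positive, every cluster point at `C₀` of the
maximizers for `C` is a maximizer for `C₀`, and compactness of `K` turns this into convergence.
-/

open Finset

open Filter Topology

/-- Berge's maximum theorem in the single-valued case. -/
lemma continuousOn_of_unique_isMaxOn {X Y R : Type*} [TopologicalSpace X] [TopologicalSpace Y]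
    [TopologicalSpace R] [Preorder R] [OrderClosedTopology R] {F : X → Y → R} {D : Set X}
    {K : Set Y} {g : X → Y} (hK : IsCompact K)
    (hF : ContinuousOn (fun p : X × Y => F p.1 p.2) (D ×ˢ K))
    (hgK : ∀ x ∈ D, g x ∈ K) (hg : ∀ x ∈ D, IsMaxOn (F x) K (g x))
    (huniq : ∀ x ∈ D, ∀ y ∈ K, IsMaxOn (F x) K y → y = g x) : ContinuousOn g D := by
  intro x₀ hx₀
  have hD : ∀ᶠ x in 𝓝[D] x₀, x ∈ D := self_mem_nhdsWithin
  refine hK.tendsto_nhds_of_unique_mapClusterPt (hD.mono hgK) fun y hy hcluster =>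
    huniq x₀ hx₀ y hy fun z hz => ?_
  obtain ⟨U, hU, hUy⟩ := mapClusterPt_iff_ultrafilter.1 hcluster
  have hUx₀ : Tendsto id U (𝓝 x₀) := Tendsto.mono_left tendsto_id (hU.trans nhdsWithin_le_nhds)
  have hUD : ∀ᶠ x in U, x ∈ D := hU hD
  have hlim {f : X → Y} {b : Y} (hfK : ∀ x ∈ D, f x ∈ K) (hb : b ∈ K)
      (hf : Tendsto f U (𝓝 b)) : Tendsto (fun x => F x (f x)) U (𝓝 (F x₀ b)) :=
    (hF (x₀, b) ⟨hx₀, hb⟩).tendsto.comp <| tendsto_nhdsWithin_iff.2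
      ⟨hUx₀.prodMk_nhds hf, hUD.mono fun x hx => ⟨hx, hfK x hx⟩⟩
  exact le_of_tendsto_of_tendsto (hlim (fun _ _ => hz) hz tendsto_const_nhds) (hlim hgK hy hUy)
    (hUD.mono fun x hx => hg x hx hz)

lemma strictConcaveOn_const_smul {𝕜 E β : Type*} [CommSemiring 𝕜] [PartialOrder 𝕜]
    [AddCommMonoid E] [SMul 𝕜 E] [AddCommMonoid β] [PartialOrder β] [Module 𝕜 β]
    [PosSMulStrictMono 𝕜 β] {s : Set E} {f : E → β} {c : 𝕜} (hc : 0 < c)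
    (hf : StrictConcaveOn 𝕜 s f) : StrictConcaveOn 𝕜 s fun x => c • f x := by
  refine ⟨hf.1, fun x hx y hy hxy a b ha hb hab => ?_⟩
  calc a • c • f x + b • c • f y = c • (a • f x + b • f y) := by
        rw [smul_add, smul_comm c, smul_comm c]
    _ < c • f (a • x + b • y) := smul_lt_smul_of_pos_left (hf.2 hx hy hxy ha hb hab) hc

lemma strictConcaveOn_sum_pi {𝕜 β ι : Type*} {E : ι → Type*} [Semiring 𝕜] [PartialOrder 𝕜]
    [∀ i, AddCommMonoid (E i)] [∀ i, Module 𝕜 (E i)] [AddCommMonoid β] [PartialOrder β]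
    [IsOrderedCancelAddMonoid β] [Module 𝕜 β] [Fintype ι] {s : ∀ i, Set (E i)}
    {f : ∀ i, E i → β} (hf : ∀ i, StrictConcaveOn 𝕜 (s i) (f i)) :
    StrictConcaveOn 𝕜 (Set.univ.pi s) fun v => ∑ i, f i (v i) := by
  refine ⟨convex_pi fun i _ => (hf i).1, fun v hv w hw hvw a b ha hb hab => ?_⟩
  obtain ⟨j, hj⟩ := Function.ne_iff.1 hvw
  simp only [smul_sum, ← sum_add_distrib]
  exact sum_lt_sum
    (fun i _ => (hf i).concaveOn.2 (hv i trivial) (hw i trivial) ha.le hb.le hab)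
    ⟨j, mem_univ j, (hf j).2 (hv j trivial) (hw j trivial) hj ha hb hab⟩

section NashWelfare

variable {N : Type*} [Fintype N]

/-- The Nash welfare of a utility vector `v` when agent `i` has weight `C i`; the Nash product of a
distribution is the Nash welfare of its utility vector. -/
noncomputable def nashWelfare (C v : N → ℝ) : ℝ :=
  ∏ i, v i ^ C i

variable {C v w : N → ℝ} {K : Set (N → ℝ)}

lemma nashWelfare_pos (hv : ∀ i, 0 < v i) : 0 < nashWelfare C v :=
  prod_pos fun i _ => Real.rpow_pos_of_pos (hv i) _

lemma pos_of_nashWelfare_pos (hC : ∀ i, C i ≠ 0) (hv : ∀ i, 0 ≤ v i)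
    (hpos : 0 < nashWelfare C v) (i : N) : 0 < v i := by
  refine (hv i).lt_of_ne' fun hvi => hpos.ne' (prod_eq_zero (mem_univ i) ?_)
  rw [hvi, Real.zero_rpow (hC i)]

lemma log_nashWelfare (hv : ∀ i, 0 < v i) :
    Real.log (nashWelfare C v) = ∑ i, C i * Real.log (v i) := by
  rw [nashWelfare, Real.log_prod fun i _ => (Real.rpow_pos_of_pos (hv i) _).ne']
  exact sum_congr rfl fun i _ => Real.log_rpow (hv i) _

lemma strictConcaveOn_log_nashWelfare (hC : ∀ i, 0 < C i) :
    StrictConcaveOn ℝ (Set.univ.pi fun _ => Set.Ioi 0) fun v => Real.log (nashWelfare C v) :=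
  (strictConcaveOn_sum_pi fun i => strictConcaveOn_const_smul (hC i) strictConcaveOn_log_Ioi).congr
    fun _ hv => (log_nashWelfare fun i => hv i trivial).symm

/-- Positive weights make `x ^ c` jointly continuous even at `x = 0`. -/
lemma continuousOn_nashWelfare :
    ContinuousOn (fun p : (N → ℝ) × (N → ℝ) => nashWelfare p.1 p.2)
      ({C | ∀ i, 0 < C i} ×ˢ Set.univ) :=
  continuousOn_finsetProd _ fun i _ => ContinuousOn.rpow (by fun_prop) (by fun_prop)
    fun _ hp => Or.inr (hp.1 i)

lemma isMaxOn_nashWelfare_unique (hconv : Convex ℝ K) (hnonneg : ∀ v ∈ K, ∀ i, 0 ≤ v i)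
    (hpos : ∃ p ∈ K, ∀ i, 0 < p i) (hC : ∀ i, 0 < C i)
    (hv : v ∈ K) (hvmax : IsMaxOn (nashWelfare C) K v)
    (hw : w ∈ K) (hwmax : IsMaxOn (nashWelfare C) K w) : v = w := by
  obtain ⟨p, hp, hp_pos⟩ := hpos
  set orthant : Set (N → ℝ) := Set.univ.pi fun _ => Set.Ioi 0
  have hconcave := (strictConcaveOn_log_nashWelfare hC).subset (s := K ∩ orthant)
    Set.inter_subset_right (hconv.inter (strictConcaveOn_log_nashWelfare hC).1)
  have hmem {z : N → ℝ} (hz : z ∈ K) (hzmax : IsMaxOn (nashWelfare C) K z) : z ∈ K ∩ orthant :=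
    ⟨hz, fun i _ => pos_of_nashWelfare_pos (fun j => (hC j).ne') (hnonneg z hz)
      ((nashWelfare_pos hp_pos).trans_le (hzmax hp)) i⟩
  have hlogmax {z : N → ℝ} (hzmax : IsMaxOn (nashWelfare C) K z) :
      IsMaxOn (fun y => Real.log (nashWelfare C y)) (K ∩ orthant) z := fun y hy =>
    Real.log_le_log (nashWelfare_pos fun i => hy.2 i trivial) (hzmax hy.1)
  exact hconcave.eq_of_isMaxOn (hlogmax hvmax) (hlogmax hwmax) (hmem hv hvmax) (hmem hw hwmax)

theorem nash_utility_map_continuous_general {𝒰 : (N → ℝ) → N → ℝ} (hK : IsCompact K)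
    (hconv : Convex ℝ K) (hnonneg : ∀ v ∈ K, ∀ i, 0 ≤ v i) (hpos : ∃ p ∈ K, ∀ i, 0 < p i)
    (h𝒰 : ∀ C : N → ℝ, (∀ i, 0 < C i) → 𝒰 C ∈ K ∧ IsMaxOn (nashWelfare C) K (𝒰 C)) :
    ContinuousOn 𝒰 {C : N → ℝ | ∀ i, 0 < C i} :=
  continuousOn_of_unique_isMaxOn hK
    (continuousOn_nashWelfare.mono (Set.prod_mono_right (Set.subset_univ K)))
    (fun C hC => (h𝒰 C hC).1) (fun C hC => (h𝒰 C hC).2) fun C hC _ hv hvmax =>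
      isMaxOn_nashWelfare_unique hconv hnonneg hpos hC hv hvmax (h𝒰 C hC).1 (h𝒰 C hC).2

end NashWelfare

section UtilityVectors

variable {A N : Type*} [Fintype A] {u : N → A → ℝ}

/-- The utility vectors attainable by distributions of value `1`, the set over which the Nash
welfare is maximized. -/
def utilityVectors (u : N → A → ℝ) : Set (N → ℝ) :=
  (fun δ i => util (u i) δ) '' {δ : A → ℝ | IsDistribution δ 1}

lemma utilityVectors_eq_image_stdSimplex (u : N → A → ℝ) :
    utilityVectors u = Fintype.linearCombination ℝ (fun x i => u i x) '' stdSimplex ℝ A := by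
  refine Set.image_congr fun δ _ => funext fun i => ?_
  simp [util, Fintype.linearCombination_apply]

lemma convex_utilityVectors (u : N → A → ℝ) : Convex ℝ (utilityVectors u) := by
  rw [utilityVectors_eq_image_stdSimplex]
  exact (convex_stdSimplex ℝ A).linear_image _

lemma isCompact_utilityVectors (u : N → A → ℝ) : IsCompact (utilityVectors u) := by
  rw [utilityVectors_eq_image_stdSimplex]
  exact (isCompact_stdSimplex ℝ A).image (LinearMap.continuous_on_pi _)

lemma nonneg_of_mem_utilityVectors (hu : ∀ i x, 0 ≤ u i x) :
    ∀ v ∈ utilityVectors u, ∀ i, 0 ≤ v i := by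
  rintro _ ⟨δ, hδ, rfl⟩ i
  exact sum_nonneg fun x _ => mul_nonneg (hδ.1 x) (hu i x)

lemma exists_pos_mem_utilityVectors [Nonempty A] (hu : ∀ i x, 0 ≤ u i x)
    (hacc : ∀ i, ∃ x, 0 < u i x) : ∃ v ∈ utilityVectors u, ∀ i, 0 < v i := by
  have hcard : 0 < (Fintype.card A : ℝ)⁻¹ := by positivity
  refine ⟨_, ⟨fun _ => (Fintype.card A : ℝ)⁻¹, ⟨fun _ => hcard.le, by simp⟩, rfl⟩, fun i => ?_⟩
  obtain ⟨x, hx⟩ := hacc i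
  exact sum_pos' (fun y _ => mul_nonneg hcard.le (hu i y)) ⟨x, mem_univ x, mul_pos hcard hx⟩

lemma isMaxOn_nashWelfare_utilityVectors_iff [Fintype N] {C : N → ℝ} {δ : A → ℝ} :
    IsMaxOn (nashWelfare C) (utilityVectors u) (fun i => util (u i) δ) ↔
      ∀ δ' : A → ℝ, IsDistribution δ' 1 → nashProduct u C δ' ≤ nashProduct u C δ :=
  Set.forall_mem_image

end UtilityVectors

theorem nash_utility_map_continuous {A N : Type*}
    [Fintype A] [Nonempty A] [Fintype N]
    (u : N → A → ℝ) (hu : ∀ i x, 0 ≤ u i x)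
    (hacc : ∀ i, ∃ x, 0 < u i x)
    (𝒰 : (N → ℝ) → (N → ℝ))
    (h𝒰 : ∀ C : N → ℝ, (∀ i, 0 < C i) →
        ∃ δ : A → ℝ, IsDistribution δ 1 ∧
          (∀ δ' : A → ℝ, IsDistribution δ' 1 →
            nashProduct u C δ' ≤ nashProduct u C δ) ∧
          ∀ i, 𝒰 C i = util (u i) δ) :
    ContinuousOn 𝒰 {C : N → ℝ | ∀ i, 0 < C i} := by
  refine nash_utility_map_continuous_general (isCompact_utilityVectors u) (convex_utilityVectors u)
    (nonneg_of_mem_utilityVectors hu) (exists_pos_mem_utilityVectors hu hacc) fun C hC => ?_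
  obtain ⟨δ, hδ, hδmax, h𝒰δ⟩ := h𝒰 C hC
  rw [funext h𝒰δ]
  exact ⟨⟨δ, hδ, rfl⟩, isMaxOn_nashWelfare_utilityVectors_iff.2 hδmax⟩
end

section
/- Let N be a finite set, let C = (C_i)_{i∈N} with C_i ≥ 0 for all i, let x ∈ ℝ^N, and let α, β > 0 be such that Σ_{i∈N} C_i·x_i = 0 and −α ≤ x_i ≤ β for all i ∈ N. Then Σ_{i∈N} C_i·x_i² ≤ α·β·Σ_{i∈N} C_i. -/
open Finset

section ChordBound

variable {R : Type*} [CommRing R] [PartialOrder R] [IsOrderedRing R]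

-- The right-hand side is the chord of `t ↦ t ^ 2` over `[a, b]`.
lemma sq_le_add_mul_sub_mul_of_mem_Icc {a b t : R} (ht : t ∈ Set.Icc a b) :
    t ^ 2 ≤ (a + b) * t - a * b := by
  have factors_nonneg : 0 ≤ (t - a) * (b - t) :=
    mul_nonneg (sub_nonneg.2 ht.1) (sub_nonneg.2 ht.2)
  rw [← sub_nonneg]
  convert factors_nonneg using 1
  ring

-- Dividing by `∑ i ∈ s, w i` turns this into the Bhatia–Davis bound
-- `Var x ≤ (b - 𝔼 x) * (𝔼 x - a)`.
theorem weighted_square_bound_general {ι : Type*} (s : Finset ι) {w x : ι → R} {a b : R}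
    (hw : ∀ i ∈ s, 0 ≤ w i) (hx : ∀ i ∈ s, x i ∈ Set.Icc a b) :
    ∑ i ∈ s, w i * x i ^ 2 ≤ (a + b) * ∑ i ∈ s, w i * x i - a * b * ∑ i ∈ s, w i :=
  calc
    ∑ i ∈ s, w i * x i ^ 2 ≤ ∑ i ∈ s, w i * ((a + b) * x i - a * b) :=
      sum_le_sum fun i hi ↦
        mul_le_mul_of_nonneg_left (sq_le_add_mul_sub_mul_of_mem_Icc (hx i hi)) (hw i hi)
    _ = ∑ i ∈ s, ((a + b) * (w i * x i) - a * b * w i) :=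
      sum_congr rfl fun i _ ↦ by ring
    _ = (a + b) * ∑ i ∈ s, w i * x i - a * b * ∑ i ∈ s, w i := by
      rw [sum_sub_distrib, ← mul_sum, ← mul_sum]

end ChordBound

theorem weighted_square_bound {N : Type*} [Fintype N]
    (C : N → ℝ) (hC : ∀ i, 0 ≤ C i)
    (x : N → ℝ) (α β : ℝ) (hα : 0 < α) (hβ : 0 < β)
    (hsum : ∑ i, C i * x i = 0)
    (hbound : ∀ i, -α ≤ x i ∧ x i ≤ β) :
    (∑ i, C i * (x i) ^ 2) ≤ α * β * ∑ i, C i := by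
  simpa [hsum] using
    weighted_square_bound_general univ (a := -α) (fun i _ ↦ hC i) (fun i _ ↦ hbound i)
end

section
/- For every μ ∈ (0, 2) there exists ε* ∈ (0, 1) with the following property: for every function Φ : [0, 2] → ℝ, all real numbers α, β ≥ 0, and every ε ∈ (0, ε*), if Φ(1) ≥ Φ(t) for all t ∈ [0, 2] and α·t − (1+ε)·β·t² ≤ Φ(t) ≤ α·t − (1−ε)·β·t² for all t ∈ [0, 2], then α ≥ μ·Φ(1). -/
/-!
Write `m = Φ 1` and step to the right of the maximum by `s`. The lower bound on `Φ (1 + s)`, the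
maximality of `m` and the upper bound on `m` force `α ≤ (2 + O(s + ε / s)) * β`. Balancing the two
error terms by `ε ≤ s ^ 2` leaves `α ≤ (2 + 6 * s) * β`, and then `m ≤ α - (1 - ε) * β` is at most
about `α / 2`.
-/

section LinearOrderedField

variable {K : Type*} [Field K] [LinearOrder K] [IsStrictOrderedRing K] {α β ε s m : K}

theorem slope_le_two_add_mul_curvature (hs : 0 < s) (hs' : s ≤ 1) (hε : ε ≤ s ^ 2) (hβ : 0 ≤ β)
    (hlower : α * (1 + s) - (1 + ε) * β * (1 + s) ^ 2 ≤ m) (hupper : m ≤ α - (1 - ε) * β) :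
    α ≤ (2 + 6 * s) * β := by
  refine le_of_mul_le_mul_right ?_ hs
  have hsq : (1 + s) ^ 2 ≤ 2 ^ 2 := by gcongr; linarith
  calc
    α * s ≤ ((2 + s) * s + ε * ((1 + s) ^ 2 + 1)) * β := by linarith
    _ ≤ ((2 + s) * s + s ^ 2 * (2 ^ 2 + 1)) * β := by gcongr
    _ = (2 + 6 * s) * β * s := by ring

theorem two_sub_mul_max_le_slope (hs : 0 < s) (hs' : s ≤ 1 / 6) (hε : ε ≤ s ^ 2) (hβ : 0 ≤ β)
    (hlower : α * (1 + s) - (1 + ε) * β * (1 + s) ^ 2 ≤ m) (hupper : m ≤ α - (1 - ε) * β) :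
    (2 - 6 * s) * m ≤ α := by
  have hslope : α ≤ (2 + 6 * s) * β :=
    slope_le_two_add_mul_curvature hs (by linarith) hε hβ hlower hupper
  have hone_sub : 0 ≤ 1 - 6 * s := by linarith
  have htwo_sub : 0 ≤ 2 - 6 * s := by linarith
  calc
    (2 - 6 * s) * m ≤ (2 - 6 * s) * (α - (1 - s ^ 2) * β) := by
      gcongr; exact hupper.trans (by gcongr)
    _ = α + (1 - 6 * s) * α - (2 - 6 * s) * (1 - s ^ 2) * β := by ring
    _ ≤ α + (1 - 6 * s) * ((2 + 6 * s) * β) - (2 - 6 * s) * (1 - s ^ 2) * β := by gcongr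
    _ = α - s ^ 2 * (34 + 6 * s) * β := by ring
    _ ≤ α := sub_le_self _ (by positivity)

theorem lin_twice_max_general {μ : K} (hμ : μ < 2) :
    ∃ εStar ∈ Set.Ioo (0 : K) 1,
      ∀ Φ : K → K, ∀ α β : K, ∀ ε ∈ Set.Ioo (0 : K) εStar,
        (∀ t ∈ Set.Icc (0 : K) 2, Φ t ≤ Φ 1) →
        (∀ t ∈ Set.Icc (0 : K) 2,
          α * t - (1 + ε) * β * t ^ 2 ≤ Φ t ∧ Φ t ≤ α * t - (1 - ε) * β * t ^ 2) →
        μ * Φ 1 ≤ α := by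
  obtain ⟨s, hs, hsμ, hs'⟩ : ∃ s : K, 0 < s ∧ s ≤ (2 - μ) / 6 ∧ s ≤ 1 / 6 :=
    ⟨min ((2 - μ) / 6) (1 / 6), lt_min (by linarith) (by norm_num), min_le_left .., min_le_right ..⟩
  refine ⟨s ^ 2, ⟨by positivity, pow_lt_one₀ hs.le (by linarith) two_ne_zero⟩, ?_⟩
  rintro Φ α β ε ⟨hε, hεs⟩ hmax hΦ
  obtain ⟨hlower, hupper⟩ := hΦ 1 ⟨by norm_num, by norm_num⟩
  have hβ : 0 ≤ β := nonneg_of_mul_nonneg_right (by linarith : 0 ≤ ε * β) hε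
  have h0 : (0 : K) ∈ Set.Icc 0 2 := ⟨le_rfl, zero_le_two⟩
  have hmax_nonneg : 0 ≤ Φ 1 := by simpa using (hΦ 0 h0).1.trans (hmax 0 h0)
  have hstep : 1 + s ∈ Set.Icc (0 : K) 2 := ⟨by linarith, by linarith⟩
  calc
    μ * Φ 1 ≤ (2 - 6 * s) * Φ 1 := by gcongr; linarith
    _ ≤ α := two_sub_mul_max_le_slope hs hs' hεs.le hβ ((hΦ _ hstep).1.trans (hmax _ hstep))
      (by simpa using hupper)

end LinearOrderedField

theorem lin_twice_max (μ : ℝ) (hμ : μ ∈ Set.Ioo (0 : ℝ) 2) :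
    ∃ εStar ∈ Set.Ioo (0 : ℝ) 1,
      ∀ Φ : ℝ → ℝ, ∀ α β : ℝ, 0 ≤ α → 0 ≤ β → ∀ ε ∈ Set.Ioo (0 : ℝ) εStar,
        (∀ t ∈ Set.Icc (0 : ℝ) 2, Φ t ≤ Φ 1) →
        (∀ t ∈ Set.Icc (0 : ℝ) 2,
          α * t - (1 + ε) * β * t ^ 2 ≤ Φ t ∧ Φ t ≤ α * t - (1 - ε) * β * t ^ 2) →
        μ * Φ 1 ≤ α := by
  obtain ⟨εStar, hεStar, h⟩ := lin_twice_max_general hμ.2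
  exact ⟨εStar, hεStar, fun Φ α β _ _ => h Φ α β⟩
end

section
/- (Characterization of decomposability.) Let C be a contribution profile and let δ ∈ Δ(|C|). Then δ is decomposable if and only if for every subset S ⊆ N: Σ_{x ∈ A : ∃ i ∈ S with u_i(x) > 0} δ(x) ≥ Σ_{i∈S} C_i. -/
/-!
Necessity is double counting: what the members of `s` receive comes from `t(s)`, the goods
acceptable to someone in `s`.

For sufficiency, build an allocation one acceptable pair at a time. Remove a pair `(j, y)` and let
`r` be the largest deficit `c(s) - d(t(s))` that occurs without it, attained at `s₀` say. Giving the
amount `r` of `y` to `j` lowers both `c j` and `d y` by `r`, and Hall's condition survives for the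
remaining demands, supplies and pairs. The critical case is `j ∉ s` and `y ∈ t(s)`, where
`c(s) + r ≤ d(t(s))` is needed. There Hall's inequality for `s ∪ s₀` and for `s ∩ s₀` does not
involve the pair `(j, y)`, and adding the two gives the claim since `s ↦ d(t(s))` is submodular.

Allocations are only required to cover the demands `C` within the supplies `δ`; as `C` and `δ` have
the same total, nothing is left over and no demand is exceeded.
-/

open Finset

open scoped Classical

/-- Decomposability of a distribution with respect to utilities `u` and profile `C`. -/
def Decomposable {A N : Type*} [Fintype A] [Fintype N]
    (u : N → A → ℝ) (C : N → ℝ) (δ : A → ℝ) : Prop :=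
  ∃ δi : N → A → ℝ, (∀ i, IsDistribution (δi i) (C i)) ∧
    (∀ x, δ x = ∑ i, δi i x) ∧
    ∀ i x, 0 < δi i x → 0 < u i x

section SupplyDemand

variable {ι α M : Type*}

section OrderedMonoid

variable [AddCommMonoid M] [PartialOrder M] {t : ι → Finset α} {c : ι → M} {d : α → M}

/-- Hall's condition for supply and demand: if `t i` is the set of goods acceptable to `i`, then the
goods acceptable to someone in `s` are in sufficient supply `d` for the total demand `c` of `s`. -/
def HallCondition [DecidableEq α] (t : ι → Finset α) (c : ι → M) (d : α → M) : Prop :=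
  ∀ s : Finset ι, ∑ i ∈ s, c i ≤ ∑ x ∈ s.biUnion t, d x

/-- `f i x` is the amount of the good `x` given to `i` in an allocation of supplies `d` meeting all
demands `c`, where `i` receives only goods from `t i`. Both supplies and demands enter as
inequalities: goods may be left over and demands may be exceeded. -/
structure IsAllocation [Fintype ι] (t : ι → Finset α) (c : ι → M) (d : α → M) (f : ι → α → M) :
    Prop where
  nonneg : 0 ≤ f
  eq_zero_of_notMem : ∀ i, ∀ x ∉ t i, f i x = 0
  demand_le : ∀ i, c i ≤ ∑ x ∈ t i, f i x
  le_supply : ∀ x, ∑ i, f i x ≤ d x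

lemma IsAllocation.sum_eq_sum_of_subset [Fintype ι] {f : ι → α → M} (hf : IsAllocation t c d f)
    {i : ι} {a : Finset α} (ha : t i ⊆ a) : ∑ x ∈ t i, f i x = ∑ x ∈ a, f i x :=
  sum_subset ha fun x _ => hf.eq_zero_of_notMem i x

lemma IsAllocation.demand_le_sum_univ [Fintype ι] [Fintype α] {f : ι → α → M}
    (hf : IsAllocation t c d f) (i : ι) : c i ≤ ∑ x, f i x :=
  (hf.demand_le i).trans_eq (hf.sum_eq_sum_of_subset (subset_univ _))

variable [DecidableEq α]

lemma IsAllocation.hallCondition [Fintype ι] [IsOrderedAddMonoid M] {f : ι → α → M}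
    (hf : IsAllocation t c d f) : HallCondition t c d := fun s =>
  calc ∑ i ∈ s, c i
      ≤ ∑ i ∈ s, ∑ x ∈ t i, f i x := sum_le_sum fun i _ => hf.demand_le i
    _ = ∑ i ∈ s, ∑ x ∈ s.biUnion t, f i x :=
        sum_congr rfl fun _ hi => hf.sum_eq_sum_of_subset (subset_biUnion_of_mem t hi)
    _ = ∑ x ∈ s.biUnion t, ∑ i ∈ s, f i x := sum_comm
    _ ≤ ∑ x ∈ s.biUnion t, d x := sum_le_sum fun x _ =>
        (sum_le_univ_sum_of_nonneg fun i => hf.nonneg i x).trans (hf.le_supply x)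

variable [DecidableEq ι]

lemma sum_biUnion_union_add_sum_biUnion_inter_le [IsOrderedAddMonoid M] (t : ι → Finset α)
    (hd : 0 ≤ d) (s₁ s₂ : Finset ι) :
    ∑ x ∈ (s₁ ∪ s₂).biUnion t, d x + ∑ x ∈ (s₁ ∩ s₂).biUnion t, d x ≤
      ∑ x ∈ s₁.biUnion t, d x + ∑ x ∈ s₂.biUnion t, d x := by
  have hinter : (s₁ ∩ s₂).biUnion t ⊆ s₁.biUnion t ∩ s₂.biUnion t :=
    subset_inter (biUnion_subset_biUnion_of_subset_left t inter_subset_left)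
      (biUnion_subset_biUnion_of_subset_left t inter_subset_right)
  rw [union_biUnion, ← sum_union_inter (s₁ := s₁.biUnion t)]
  exact add_le_add_right (sum_le_sum_of_subset_of_nonneg hinter fun x _ _ => hd x) _

end OrderedMonoid

lemma biUnion_update_insert [DecidableEq ι] [DecidableEq α] (t : ι → Finset α) (s : Finset ι)
    (j : ι) (y : α) :
    s.biUnion (Function.update t j (insert y (t j))) =
      if j ∈ s then insert y (s.biUnion t) else s.biUnion t := by
  ext x
  grind [Function.update_apply]

section OrderedGroup

variable [AddCommGroup M] [PartialOrder M] [IsOrderedAddMonoid M]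
  {t : ι → Finset α} {c : ι → M} {d : α → M}

namespace HallCondition

variable [DecidableEq ι] [DecidableEq α] {j : ι} {y : α}

lemma sum_sub_sum_biUnion_nonpos (h : HallCondition (Function.update t j (insert y (t j))) c d)
    {s : Finset ι} (hs : j ∈ s → y ∈ s.biUnion t) :
    ∑ i ∈ s, c i - ∑ x ∈ s.biUnion t, d x ≤ 0 := by
  have hle := h s
  rw [biUnion_update_insert, ite_eq_right_iff.2 fun hj => insert_eq_of_mem (hs hj)] at hle
  exact sub_nonpos.2 hle

lemma sum_sub_sum_biUnion_le (hd : 0 ≤ d)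
    (h : HallCondition (Function.update t j (insert y (t j))) c d) (s : Finset ι) :
    ∑ i ∈ s, c i - ∑ x ∈ s.biUnion t, d x ≤ d y := by
  by_cases hs : j ∈ s → y ∈ s.biUnion t
  · exact (h.sum_sub_sum_biUnion_nonpos hs).trans (hd y)
  · obtain ⟨hj, hy⟩ := Classical.not_imp.1 hs
    have hle := h s
    rwa [biUnion_update_insert, if_pos hj, sum_insert hy, ← sub_le_iff_le_add] at hle

lemma sum_sub_sum_biUnion_le_of_notMem (hd : 0 ≤ d)
    (h : HallCondition (Function.update t j (insert y (t j))) c d) {s : Finset ι} (hj : j ∉ s)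
    (hy : y ∈ s.biUnion t) (s₀ : Finset ι) :
    ∑ i ∈ s₀, c i - ∑ x ∈ s₀.biUnion t, d x ≤ ∑ x ∈ s.biUnion t, d x - ∑ i ∈ s, c i := by
  have hunion := sub_nonpos.1 <| h.sum_sub_sum_biUnion_nonpos (s := s ∪ s₀)
    fun _ => biUnion_subset_biUnion_of_subset_left t subset_union_left hy
  have hinter := sub_nonpos.1 <| h.sum_sub_sum_biUnion_nonpos (s := s ∩ s₀)
    fun hjs => absurd (mem_of_mem_inter_left hjs) hj
  rw [sub_le_sub_iff]
  calc ∑ i ∈ s₀, c i + ∑ i ∈ s, c i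
      = ∑ i ∈ s ∪ s₀, c i + ∑ i ∈ s ∩ s₀, c i := by rw [sum_union_inter, add_comm]
    _ ≤ ∑ x ∈ (s ∪ s₀).biUnion t, d x + ∑ x ∈ (s ∩ s₀).biUnion t, d x :=
        add_le_add hunion hinter
    _ ≤ ∑ x ∈ s.biUnion t, d x + ∑ x ∈ s₀.biUnion t, d x :=
        sum_biUnion_union_add_sum_biUnion_inter_le t hd s s₀

end HallCondition

variable [Fintype ι]

lemma IsAllocation.add_single [DecidableEq ι] [DecidableEq α] {f : ι → α → M} {j : ι} {y : α}
    {r : M} (hy : y ∉ t j) (hr : 0 ≤ r)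
    (hf : IsAllocation t (c - Pi.single j r) (d - Pi.single y r) f) :
    IsAllocation (Function.update t j (insert y (t j))) c d
      (f + Pi.single j (Pi.single y r)) where
  nonneg := add_nonneg hf.nonneg (Pi.single_nonneg.2 (Pi.single_nonneg.2 hr))
  eq_zero_of_notMem i x hx := by
    have hzero := hf.eq_zero_of_notMem i x
    obtain rfl | hij := eq_or_ne i j <;> simp_all
  demand_le i := by
    have hdem := hf.demand_le i
    obtain rfl | hij := eq_or_ne i j
    · simpa [sum_add_distrib, sum_insert hy, hf.eq_zero_of_notMem i y hy, hy, add_comm] using hdem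
    · simpa [hij] using hdem
  le_supply x := by
    have hcol : ∑ i, (f + Pi.single j (Pi.single y r) : ι → α → M) i x =
        ∑ i, f i x + (Pi.single y r : α → M) x := by
      simp only [← Finset.sum_apply, Pi.add_apply, sum_add_distrib, sum_pi_single', mem_univ,
        if_true]
    rw [hcol, ← le_sub_iff_add_le]
    exact hf.le_supply x

namespace IsAllocation

variable [Fintype α] {f : ι → α → M}

lemma sum_eq_demand (hf : IsAllocation t c d f) (hdc : ∑ x, d x ≤ ∑ i, c i) (i : ι) :
    ∑ x, f i x = c i := by
  have htotal : ∑ i, ∑ x, f i x ≤ ∑ i, c i :=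
    sum_comm.trans_le <| (sum_le_sum fun x _ => hf.le_supply x).trans hdc
  have hle := fun i (_ : i ∈ univ) => hf.demand_le_sum_univ i
  exact ((sum_eq_sum_iff_of_le hle).1 ((sum_le_sum hle).antisymm htotal) i (mem_univ i)).symm

lemma sum_eq_supply (hf : IsAllocation t c d f) (hdc : ∑ x, d x ≤ ∑ i, c i) (x : α) :
    ∑ i, f i x = d x := by
  have htotal : ∑ x, d x ≤ ∑ x, ∑ i, f i x :=
    hdc.trans <| (sum_le_sum fun i _ => hf.demand_le_sum_univ i).trans_eq sum_comm
  have hle := fun x (_ : x ∈ univ) => hf.le_supply x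
  exact (sum_eq_sum_iff_of_le hle).1 ((sum_le_sum hle).antisymm htotal) x (mem_univ x)

end IsAllocation

end OrderedGroup

section LinearOrderedGroup

variable [AddCommGroup M] [LinearOrder M] [IsOrderedAddMonoid M]
  {t : ι → Finset α} {c : ι → M} {d : α → M}

lemma HallCondition.exists_sub_single [Finite ι] [DecidableEq ι] [DecidableEq α] {j : ι} {y : α}
    (hd : 0 ≤ d) (h : HallCondition (Function.update t j (insert y (t j))) c d) :
    ∃ r, 0 ≤ r ∧ r ≤ d y ∧ HallCondition t (c - Pi.single j r) (d - Pi.single y r) := by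
  obtain ⟨s₀, hmax⟩ :=
    Finite.exists_max fun s : Finset ι => ∑ i ∈ s, c i - ∑ x ∈ s.biUnion t, d x
  refine ⟨_, by simpa using hmax ∅, h.sum_sub_sum_biUnion_le hd s₀, fun s => ?_⟩
  simp only [Pi.sub_apply, sum_sub_distrib, sum_pi_single']
  by_cases hj : j ∈ s <;> by_cases hy : y ∈ s.biUnion t <;>
    simp only [hj, hy, if_true, if_false, sub_zero]
  · exact sub_le_sub_right (sub_nonpos.1 (h.sum_sub_sum_biUnion_nonpos fun _ => hy)) _
  · exact sub_le_comm.1 (hmax s)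
  · exact le_sub_comm.1 (h.sum_sub_sum_biUnion_le_of_notMem hd hj hy s₀)
  · exact sub_nonpos.1 (h.sum_sub_sum_biUnion_nonpos fun hjs => absurd hjs hj)

theorem HallCondition.exists_isAllocation [Fintype ι] [DecidableEq α] (hd : 0 ≤ d)
    (h : HallCondition t c d) : ∃ f, IsAllocation t c d f := by
  induction t using induction_on_pi generalizing c d with
  | h0 =>
    exact ⟨0, le_rfl, fun _ _ _ => rfl, fun i => by simpa using h {i},
      fun x => by simpa using hd x⟩
  | step t j y hy ih =>
    obtain ⟨r, hr, hry, hsub⟩ := h.exists_sub_single hd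
    have hd' : 0 ≤ d - Pi.single y r := by
      refine sub_nonneg.2 fun x => ?_
      obtain rfl | hxy := eq_or_ne x y
      · simpa using hry
      · simpa [hxy] using hd x
    obtain ⟨f, hf⟩ := ih hd' hsub
    exact ⟨_, hf.add_single hy hr⟩

end LinearOrderedGroup

end SupplyDemand

lemma decomposable_iff_exists_isAllocation {A N : Type*} [Fintype A] [Fintype N]
    {u : N → A → ℝ} {C : N → ℝ} {δ : A → ℝ} (hδ : ∑ x, δ x = ∑ i, C i) :
    Decomposable u C δ ↔ ∃ f, IsAllocation (fun i => univ.filter fun x => 0 < u i x) C δ f := by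
  constructor
  · rintro ⟨f, hf, hsum, hsupp⟩
    have hzero (i : N) (x : A) (hx : ¬ 0 < u i x) : f i x = 0 :=
      (not_lt.1 (mt (hsupp i x) hx)).antisymm ((hf i).1 x)
    refine ⟨f, fun i => (hf i).1, by simpa using hzero, fun i => ?_, fun x => (hsum x).ge⟩
    rw [sum_filter_of_ne fun x _ => not_imp_comm.1 (hzero i x), (hf i).2]
  · rintro ⟨f, hf⟩
    refine ⟨f, fun i => ⟨hf.nonneg i, hf.sum_eq_demand hδ.le i⟩,
      fun x => (hf.sum_eq_supply hδ.le x).symm, fun i x hpos => ?_⟩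
    by_contra hx
    exact hpos.ne' (hf.eq_zero_of_notMem i x (by simpa using hx))

theorem decomposable_iff_hall {A N : Type*} [Fintype A] [Nonempty A] [Fintype N]
    (u : N → A → ℝ) (hu : ∀ i x, 0 ≤ u i x)
    (C : N → ℝ) (hC : ∀ i, 0 ≤ C i)
    (δ : A → ℝ) (hδ : IsDistribution δ (∑ i, C i)) :
    Decomposable u C δ ↔
      ∀ S : Finset N,
        (∑ i ∈ S, C i) ≤ ∑ x ∈ Finset.univ.filter (fun x => ∃ i ∈ S, 0 < u i x), δ x := by
  have happroved (S : Finset N) : (univ.filter fun x => ∃ i ∈ S, 0 < u i x) =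
      S.biUnion fun i => univ.filter fun x => 0 < u i x := by
    ext x
    simp
  simp only [happroved]
  rw [decomposable_iff_exists_isAllocation hδ.2]
  exact ⟨fun ⟨_, hf⟩ => hf.hallCondition, HallCondition.exists_isAllocation hδ.1⟩
end
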